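/- Let X and Y be nonempty finite sets, μ, ν strictly positive weight functions on X and Y, c a cost, ε > 0, φ₁, φ₂ entropy functions satisfying Assumption A, and 𝒥 a partition of X into nonempty subsets. Let π be a nonnegative plan with E(π) < ∞, write π_J := π|_{X_J × Y} for J ∈ 𝒥, and let π̃_J be the unique minimizer of the cell subproblem E_J(·| ν_{-J}) with ν_{-J}(y) := Σ_{x ∉ X_J} π(x,y). Define the averaged update π̄ := Σ_{J ∈ 𝒥} [(1 − 1/|𝒥|)·π_J + (1/|𝒥|)·π̃_J]. Then E(π̄) ≤ E(π), and equality holds only if π_J = π̃_J for every J ∈ 𝒥 (in which case π is the global minimizer of E). -/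

import Mathlib

open Filter Topology
open scoped Classical

noncomputable section

/-- `φ : ℝ → ℝ ∪ {+∞}` is an entropy function: lower semicontinuous, convex,
`dom(φ) ⊆ [0,∞)`, `dom(φ)\{0} ≠ ∅`, never taking the value `-∞`. -/
def IsEntropyFn (φ : ℝ → EReal) : Prop :=
  LowerSemicontinuous φ ∧
  (∀ x y a b : ℝ, 0 ≤ a → 0 ≤ b → a + b = 1 →
      φ (a * x + b * y) ≤ (a : EReal) * φ x + (b : EReal) * φ y) ∧
  (∀ x : ℝ, φ x ≠ ⊥) ∧
  (∀ x : ℝ, φ x < ⊤ → 0 ≤ x) ∧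
  (∃ x : ℝ, x ≠ 0 ∧ φ x < ⊤)

/-- The recession slope `φ'_∞ = lim_{x→∞} φ(x)/x`. -/
def recessionSlope (φ : ℝ → EReal) : EReal :=
  Filter.limsup (fun x : ℝ => φ x * ((x⁻¹ : ℝ) : EReal)) Filter.atTop

/-- The `φ`-divergence on a finite set `Z`:
`D_φ(ρ|σ) = ∑_{z : σ z > 0} σ z · φ(ρ z / σ z) + φ'_∞ · ∑_{z : σ z = 0} ρ z`. -/
def divergence {Z : Type*} [Fintype Z] (φ : ℝ → EReal) (ρ σ : Z → ℝ) : EReal :=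
  (∑ z, if 0 < σ z then (σ z : EReal) * φ (ρ z / σ z) else 0)
    + recessionSlope φ * ((∑ z, if σ z = 0 then ρ z else 0 : ℝ) : EReal)

/-- The convex conjugate `φ*(z) = sup_{x ∈ ℝ} (z·x − φ(x))`. -/
def conjFn (φ : ℝ → EReal) (z : ℝ) : EReal :=
  ⨆ x : ℝ, (((z * x : ℝ) : EReal) - φ x)

/-- Kullback–Leibler divergence on a finite set, with `0·log 0 = 0`:
`KL(ρ|σ) = ∑ z (ρ z log(ρ z/σ z) − ρ z + σ z)` if `ρ ≪ σ`, else `+∞`. -/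
def KLfin {Z : Type*} [Fintype Z] (ρ σ : Z → ℝ) : EReal :=
  if ∀ z, σ z = 0 → ρ z = 0 then
    ((∑ z, (ρ z * Real.log (ρ z / σ z) - ρ z + σ z) : ℝ) : EReal)
  else ⊤

/-- Assumption A: the entropy function `φ` is nonnegative, finite on `[0,∞)`,
and continuously differentiable on the interior `(0,∞)` of its domain. -/
def AssumptionA (φ : ℝ → EReal) : Prop :=
  IsEntropyFn φ ∧ (∀ x : ℝ, 0 ≤ φ x) ∧ (∀ x : ℝ, 0 ≤ x → φ x ≠ ⊤) ∧
  ContDiffOn ℝ 1 (fun s : ℝ => (φ s).toReal) (Set.Ioi (0 : ℝ))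

/-- Primal objective of the unbalanced (cell) problem with `Y`-submarginal `νm`:
`E_J(π|νm) = ⟨c, π⟩ + ε KL(π | μ⊗ν) + D_{φ₁}(P_X π | μ) + D_{φ₂}(P_Y π + νm | ν)`. -/
def EJfun {W Y : Type*} [Fintype W] [Fintype Y]
    (c : W → Y → ℝ) (ε : ℝ) (φ₁ φ₂ : ℝ → EReal)
    (μ : W → ℝ) (ν : Y → ℝ) (νm : Y → ℝ) (π : W → Y → ℝ) : EReal :=
  ((∑ x, ∑ y, c x y * π x y : ℝ) : EReal)
    + (ε : EReal) * KLfin (fun p : W × Y => π p.1 p.2) (fun p : W × Y => μ p.1 * ν p.2)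
    + divergence φ₁ (fun x => ∑ y, π x y) μ
    + divergence φ₂ (fun y => (∑ x, π x y) + νm y) ν

/-- Dual objective of the unbalanced (cell) problem with `Y`-submarginal `νm`. -/
def DJfun {W Y : Type*} [Fintype W] [Fintype Y]
    (c : W → Y → ℝ) (ε : ℝ) (φ₁ φ₂ : ℝ → EReal)
    (μ : W → ℝ) (ν : Y → ℝ) (νm : Y → ℝ) (α : W → ℝ) (β : Y → ℝ) : EReal :=
  ((ε * ∑ x, ∑ y, (1 - Real.exp ((α x + β y - c x y) / ε)) * (μ x * ν y) : ℝ) : EReal)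
    - (∑ x, (μ x : EReal) * conjFn φ₁ (-(α x)))
    - (∑ y, (ν y : EReal) * conjFn φ₂ (-(β y)))
    - ((∑ y, β y * νm y : ℝ) : EReal)

/-- The `Y`-submarginal `ν_{-J}` of the plan `π` outside the cell `J`:
`ν_{-J}(y) = ∑_{x ∉ J} π(x,y)`. -/
def outMarg {X Y : Type*} [Fintype X] (J : Set X) (π : X → Y → ℝ) : Y → ℝ :=
  fun y => ∑ x, (Jᶜ).indicator (fun x' => π x' y) x

/-- The global unbalanced objective
`E(π) = ⟨c, π⟩ + ε KL(π|μ⊗ν) + D_{φ₁}(P_X π|μ) + D_{φ₂}(P_Y π|ν)`. -/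
def Eglobal {X Y : Type*} [Fintype X] [Fintype Y]
    (c : X → Y → ℝ) (ε : ℝ) (φ₁ φ₂ : ℝ → EReal)
    (μ : X → ℝ) (ν : Y → ℝ) (π : X → Y → ℝ) : EReal :=
  EJfun c ε φ₁ φ₂ μ ν (fun _ => 0) π

/-- An indexed family `Js : Fin n → Set X` is a partition of `X` into nonempty
subsets. -/
def IsFinPartition {X : Type*} {n : ℕ} (Js : Fin n → Set X) : Prop :=
  (∀ i, (Js i).Nonempty) ∧ (⋃ i, Js i) = Set.univ ∧
    ∀ i j, i ≠ j → Disjoint (Js i) (Js j)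

/-- `update` implements one cell update: `update J π` agrees with `π` outside
`J × Y` and its restriction to `J × Y` is the (unique) minimizer of the cell
subproblem `E_J(·|ν_{-J})` with `ν_{-J}(y) = ∑_{x ∉ J} π(x,y)`. -/
def IsCellUpdate {X Y : Type*} [Fintype X] [Fintype Y]
    (c : X → Y → ℝ) (ε : ℝ) (φ₁ φ₂ : ℝ → EReal) (μ : X → ℝ) (ν : Y → ℝ)
    (update : Set X → (X → Y → ℝ) → (X → Y → ℝ)) : Prop :=
  ∀ (J : Set X) (π : X → Y → ℝ), (∀ x y, 0 ≤ π x y) →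
    (∀ x y, 0 ≤ update J π x y) ∧
    (∀ x, x ∉ J → ∀ y, update J π x y = π x y) ∧
    ∀ π' : ↥J → Y → ℝ, (∀ (j : J) (y : Y), 0 ≤ π' j y) →
      EJfun (fun (j : J) y => c j y) ε φ₁ φ₂ (fun (j : J) => μ j) ν (outMarg J π)
          (fun (j : J) y => update J π j y)
        ≤ EJfun (fun (j : J) y => c j y) ε φ₁ φ₂ (fun (j : J) => μ j) ν (outMarg J π) π'

/-- One sequential domain decomposition sweep: cycle through the cells of the
partition in their fixed order, updating the current plan after each cell. -/
def sweep {X Y : Type*} (update : Set X → (X → Y → ℝ) → (X → Y → ℝ))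
    {n : ℕ} (Js : Fin n → Set X) (π : X → Y → ℝ) : X → Y → ℝ :=
  (List.ofFn Js).foldl (fun p J => update J p) π

def entT (m x : ℝ) : ℝ := x * Real.log (x / m) - x + m

def Rfun {W Y : Type*} [Fintype W] [Fintype Y]
    (c : W → Y → ℝ) (ε : ℝ) (f₁ f₂ : ℝ → ℝ)
    (μ : W → ℝ) (ν : Y → ℝ) (νm : Y → ℝ) (p : W → Y → ℝ) : ℝ :=
  (∑ x, ∑ y, c x y * p x y)
    + ε * (∑ x, ∑ y, entT (μ x * ν y) (p x y))
    + (∑ x, μ x * f₁ ((∑ y, p x y) / μ x))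
    + (∑ y, ν y * f₂ (((∑ x, p x y) + νm y) / ν y))

theorem ereal_coe_sum {Z : Type*} (s : Finset Z) (f : Z → ℝ) :
    ((∑ z ∈ s, f z : ℝ) : EReal) = ∑ z ∈ s, (f z : EReal) := by
  induction s using Finset.induction_on with
  | empty => simp
  | insert a s ha ih => rw [Finset.sum_insert ha, Finset.sum_insert ha, EReal.coe_add, ih]

theorem phi_coe {φ : ℝ → EReal} (h : AssumptionA φ) {x : ℝ} (hx : 0 ≤ x) :
    (((φ x).toReal : ℝ) : EReal) = φ x :=
  EReal.coe_toReal (h.2.2.1 x hx) (h.1.2.2.1 x)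

theorem divergence_coe {Z : Type*} [Fintype Z] {φ : ℝ → EReal} (h : AssumptionA φ)
    {ρ σ : Z → ℝ} (hρ : ∀ z, 0 ≤ ρ z) (hσ : ∀ z, 0 < σ z) :
    divergence φ ρ σ = ((∑ z, σ z * (φ (ρ z / σ z)).toReal : ℝ) : EReal) := by
  unfold divergence
  have h0 : (∑ z, if σ z = 0 then ρ z else 0 : ℝ) = 0 :=
    Finset.sum_eq_zero fun z _ => by rw [if_neg (hσ z).ne']
  rw [h0, EReal.coe_zero, mul_zero, add_zero, ereal_coe_sum]
  refine Finset.sum_congr rfl fun z _ => ?_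
  rw [if_pos (hσ z), EReal.coe_mul, phi_coe h (div_nonneg (hρ z) (hσ z).le)]

theorem EJfun_coe {W Y : Type*} [Fintype W] [Fintype Y]
    (c : W → Y → ℝ) (ε : ℝ) {φ₁ φ₂ : ℝ → EReal} (h₁ : AssumptionA φ₁) (h₂ : AssumptionA φ₂)
    {μ : W → ℝ} {ν : Y → ℝ} (hμ : ∀ x, 0 < μ x) (hν : ∀ y, 0 < ν y)
    {νm : Y → ℝ} (hm : ∀ y, 0 ≤ νm y) {p : W → Y → ℝ} (hp : ∀ x y, 0 ≤ p x y) :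
    EJfun c ε φ₁ φ₂ μ ν νm p
      = ((Rfun c ε (fun s => (φ₁ s).toReal) (fun s => (φ₂ s).toReal) μ ν νm p : ℝ) : EReal) := by
  unfold EJfun Rfun
  rw [divergence_coe h₁ (fun x => Finset.sum_nonneg fun y _ => hp x y) hμ,
    divergence_coe h₂ (fun y => add_nonneg (Finset.sum_nonneg fun x _ => hp x y) (hm y)) hν]
  unfold KLfin
  rw [if_pos (fun z hz => absurd hz (mul_pos (hμ z.1) (hν z.2)).ne')]
  rw [Fintype.sum_prod_type]
  simp only [EReal.coe_add, EReal.coe_mul, entT]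

theorem phi_convex {φ : ℝ → EReal} (h : AssumptionA φ) {x y a b : ℝ} (hx : 0 ≤ x) (hy : 0 ≤ y)
    (ha : 0 ≤ a) (hb : 0 ≤ b) (hab : a + b = 1) :
    (φ (a * x + b * y)).toReal ≤ a * (φ x).toReal + b * (φ y).toReal := by
  have := h.1.2.1 x y a b ha hb hab
  rw [← phi_coe h hx, ← phi_coe h hy, ← phi_coe h (by positivity : 0 ≤ a * x + b * y)] at this
  exact_mod_cast this

theorem entT_gain {m x y a b : ℝ} (hm : 0 < m) (hab : a + b = 1) :
    entT m (a * x + b * y) - a * entT m x - b * entT m y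
      = (a * x + b * y) * Real.log (a * x + b * y) - a * (x * Real.log x)
        - b * (y * Real.log y) := by
  have key : ∀ x : ℝ, entT m x = x * Real.log x - x * Real.log m - x + m := by
    intro x
    unfold entT
    by_cases hx : x = 0
    · simp [hx]
    · rw [Real.log_div hx hm.ne']; ring
  rw [key, key, key]
  have : b = 1 - a := by linarith
  subst this
  ring

theorem mul_log_le {x y a b : ℝ} (hx : 0 ≤ x) (hy : 0 ≤ y)
    (ha : 0 ≤ a) (hb : 0 ≤ b) (hab : a + b = 1) :
    (a * x + b * y) * Real.log (a * x + b * y) - a * (x * Real.log x)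
        - b * (y * Real.log y) ≤ 0 := by
  have := Real.convexOn_mul_log.2 (Set.mem_Ici.2 hx) (Set.mem_Ici.2 hy) ha hb hab
  simp only [smul_eq_mul] at this
  linarith

/-- Quantitative convexity. -/
theorem Rfun_gain {X Y : Type*} [Fintype X] [Fintype Y]
    (c : X → Y → ℝ) {ε : ℝ} (hε : 0 < ε) {φ₁ φ₂ : ℝ → EReal}
    (h₁ : AssumptionA φ₁) (h₂ : AssumptionA φ₂)
    {μ : X → ℝ} {ν : Y → ℝ} (hμ : ∀ x, 0 < μ x) (hν : ∀ y, 0 < ν y)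
    {p q : X → Y → ℝ} (hp : ∀ x y, 0 ≤ p x y) (hq : ∀ x y, 0 ≤ q x y)
    {a b : ℝ} (ha : 0 ≤ a) (hb : 0 ≤ b) (hab : a + b = 1) (x₀ : X) (y₀ : Y) :
    Rfun c ε (fun s => (φ₁ s).toReal) (fun s => (φ₂ s).toReal) μ ν (fun _ => 0)
        (fun x y => a * p x y + b * q x y)
      ≤ a * Rfun c ε (fun s => (φ₁ s).toReal) (fun s => (φ₂ s).toReal) μ ν (fun _ => 0) p
        + b * Rfun c ε (fun s => (φ₁ s).toReal) (fun s => (φ₂ s).toReal) μ ν (fun _ => 0) q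
        + ε * ((a * p x₀ y₀ + b * q x₀ y₀) * Real.log (a * p x₀ y₀ + b * q x₀ y₀)
          - a * (p x₀ y₀ * Real.log (p x₀ y₀)) - b * (q x₀ y₀ * Real.log (q x₀ y₀))) := by
  unfold Rfun
  have e1 : (∑ x, ∑ y, c x y * (a * p x y + b * q x y))
      = a * (∑ x, ∑ y, c x y * p x y) + b * (∑ x, ∑ y, c x y * q x y) := by
    simp only [Finset.mul_sum, ← Finset.sum_add_distrib]
    refine Finset.sum_congr rfl fun x _ => Finset.sum_congr rfl fun y _ => ?_
    ring
  set d : X → Y → ℝ := fun x y => (a * p x y + b * q x y) * Real.log (a * p x y + b * q x y)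
          - a * (p x y * Real.log (p x y)) - b * (q x y * Real.log (q x y)) with hd
  have hdle : ∀ x y, d x y ≤ 0 := fun x y => mul_log_le (hp x y) (hq x y) ha hb hab
  have e2 : (∑ x, ∑ y, entT (μ x * ν y) (a * p x y + b * q x y))
      = a * (∑ x, ∑ y, entT (μ x * ν y) (p x y)) + b * (∑ x, ∑ y, entT (μ x * ν y) (q x y))
        + ∑ x, ∑ y, d x y := by
    simp only [Finset.mul_sum, ← Finset.sum_add_distrib]
    refine Finset.sum_congr rfl fun x _ => Finset.sum_congr rfl fun y _ => ?_
    have := entT_gain (x := p x y) (y := q x y) (mul_pos (hμ x) (hν y)) hab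
    simp only [hd]
    linarith
  have e3 : ∑ x, ∑ y, d x y ≤ d x₀ y₀ := by
    have i1 : ∑ x, ∑ y, d x y ≤ ∑ y, d x₀ y := by
      have := Finset.sum_le_sum_of_subset_of_nonneg (f := fun x => - ∑ y, d x y)
        (Finset.subset_univ {x₀})
        (fun x _ _ => neg_nonneg.2 (Finset.sum_nonpos fun y _ => hdle x y))
      simp only [Finset.sum_singleton, Finset.sum_neg_distrib] at this
      linarith
    have i2 : ∑ y, d x₀ y ≤ d x₀ y₀ := by
      have := Finset.sum_le_sum_of_subset_of_nonneg (f := fun y => - d x₀ y)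
        (Finset.subset_univ {y₀}) (fun y _ _ => neg_nonneg.2 (hdle x₀ y))
      simp only [Finset.sum_singleton, Finset.sum_neg_distrib] at this
      linarith
    exact i1.trans i2
  have e4 : (∑ x, μ x * (φ₁ ((∑ y, (a * p x y + b * q x y)) / μ x)).toReal)
      ≤ a * (∑ x, μ x * (φ₁ ((∑ y, p x y) / μ x)).toReal)
        + b * (∑ x, μ x * (φ₁ ((∑ y, q x y) / μ x)).toReal) := by
    simp only [Finset.mul_sum, ← Finset.sum_add_distrib]
    refine Finset.sum_le_sum fun x _ => ?_
    have := phi_convex h₁ (div_nonneg (Finset.sum_nonneg (s := Finset.univ) (f := fun y => p x y) fun y _ => hp x y) (hμ x).le)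
      (div_nonneg (Finset.sum_nonneg (s := Finset.univ) (f := fun y => q x y) fun y _ => hq x y) (hμ x).le) ha hb hab
    have e : (∑ y, (a * p x y + b * q x y)) / μ x
        = a * ((∑ y, p x y) / μ x) + b * ((∑ y, q x y) / μ x) := by
      rw [Finset.sum_add_distrib, ← Finset.mul_sum, ← Finset.mul_sum]; ring
    rw [e]
    nlinarith [mul_le_mul_of_nonneg_left this (hμ x).le]
  have e5 : (∑ y, ν y * (φ₂ (((∑ x, (a * p x y + b * q x y)) + 0) / ν y)).toReal)
      ≤ a * (∑ y, ν y * (φ₂ (((∑ x, p x y) + 0) / ν y)).toReal)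
        + b * (∑ y, ν y * (φ₂ (((∑ x, q x y) + 0) / ν y)).toReal) := by
    simp only [Finset.mul_sum, ← Finset.sum_add_distrib, add_zero]
    refine Finset.sum_le_sum fun y _ => ?_
    have := phi_convex h₂ (div_nonneg (Finset.sum_nonneg (s := Finset.univ) (f := fun x => p x y) fun x _ => hp x y) (hν y).le)
      (div_nonneg (Finset.sum_nonneg (s := Finset.univ) (f := fun x => q x y) fun x _ => hq x y) (hν y).le) ha hb hab
    have e : (∑ x, (a * p x y + b * q x y)) / ν y
        = a * ((∑ x, p x y) / ν y) + b * ((∑ x, q x y) / ν y) := by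
      rw [Finset.sum_add_distrib, ← Finset.mul_sum, ← Finset.mul_sum]; ring
    rw [e]
    nlinarith [mul_le_mul_of_nonneg_left this (hν y).le]
  have e6 := mul_le_mul_of_nonneg_left e3 hε.le
  rw [e1, e2]
  simp only [hd] at e6 ⊢
  linarith

theorem phi_diff {φ : ℝ → EReal} (h : AssumptionA φ) {x : ℝ} (hx : 0 < x) :
    DifferentiableAt ℝ (fun s : ℝ => (φ s).toReal) x :=
  (h.2.2.2.differentiableOn (by norm_num)).differentiableAt (Ioi_mem_nhds hx)

theorem Rfun_diff {X Y : Type*} [Fintype X] [Fintype Y] [Nonempty X] [Nonempty Y]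
    (c : X → Y → ℝ) (ε : ℝ) {φ₁ φ₂ : ℝ → EReal}
    (h₁ : AssumptionA φ₁) (h₂ : AssumptionA φ₂)
    {μ : X → ℝ} {ν : Y → ℝ} (hμ : ∀ x, 0 < μ x) (hν : ∀ y, 0 < ν y)
    {p : X → Y → ℝ} (hp : ∀ x y, 0 < p x y) :
    DifferentiableAt ℝ
      (Rfun c ε (fun s => (φ₁ s).toReal) (fun s => (φ₂ s).toReal) μ ν (fun _ => 0)) p := by
  unfold Rfun
  have hev : ∀ x y, DifferentiableAt ℝ (fun q : X → Y → ℝ => q x y) p := by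
    intro x y
    fun_prop
  refine DifferentiableAt.add (DifferentiableAt.add (DifferentiableAt.add ?_ ?_) ?_) ?_
  · fun_prop
  · refine DifferentiableAt.const_mul ?_ _
    refine DifferentiableAt.fun_sum fun x _ => DifferentiableAt.fun_sum fun y _ => ?_
    unfold entT
    have : p x y / (μ x * ν y) ≠ 0 := (div_pos (hp x y) (mul_pos (hμ x) (hν y))).ne'
    have hlog : DifferentiableAt ℝ (fun q : X → Y → ℝ => Real.log (q x y / (μ x * ν y))) p :=
      DifferentiableAt.log (by fun_prop) this
    fun_prop
  · refine DifferentiableAt.fun_sum fun x _ => DifferentiableAt.const_mul ?_ _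
    have hpos : 0 < (∑ y, p x y) / μ x :=
      div_pos (Finset.sum_pos (fun y _ => hp x y) Finset.univ_nonempty) (hμ x)
    exact DifferentiableAt.comp (g := fun s : ℝ => (φ₁ s).toReal) p (phi_diff h₁ hpos)
      (by fun_prop : DifferentiableAt ℝ (fun q : X → Y → ℝ => (∑ y, q x y) / μ x) p)
  · refine DifferentiableAt.fun_sum fun y _ => DifferentiableAt.const_mul ?_ _
    have hpos : 0 < ((∑ x, p x y) + 0) / ν y := by
      rw [add_zero]
      exact div_pos (Finset.sum_pos (fun x _ => hp x y) Finset.univ_nonempty) (hν y)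
    exact DifferentiableAt.comp (g := fun s : ℝ => (φ₂ s).toReal) p (phi_diff h₂ hpos)
      (by fun_prop : DifferentiableAt ℝ (fun q : X → Y → ℝ => ((∑ x, q x y) + 0) / ν y) p)

theorem sum_split {X : Type*} [Fintype X] (J : Set X) [Fintype ↥J] (g : X → ℝ) :
    ∑ x, g x = ∑ j : J, g j + ∑ x, (Jᶜ).indicator g x := by
  have h : ∑ j : J, g j = ∑ x, J.indicator g x := by
    rw [Finset.sum_subtype (Finset.univ.filter (· ∈ J)) (p := (· ∈ J)) (by simp) g |>.symm,
      Finset.sum_filter]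
    refine Finset.sum_congr rfl fun x _ => ?_
    simp [Set.indicator_apply]
  rw [h, ← Finset.sum_add_distrib]
  refine Finset.sum_congr rfl fun x _ => ?_
  by_cases hx : x ∈ J <;> simp [hx]

def glue {X Y : Type*} (J : Set X) (π : X → Y → ℝ) (q : ↥J → Y → ℝ) : X → Y → ℝ :=
  fun x y => if h : x ∈ J then q ⟨x, h⟩ y else π x y

theorem Rfun_glue {X Y : Type*} [Fintype X] [Fintype Y]
    (c : X → Y → ℝ) (ε : ℝ) (f₁ f₂ : ℝ → ℝ) (μ : X → ℝ) (ν : Y → ℝ)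
    (J : Set X) [Fintype ↥J] (π : X → Y → ℝ) :
    ∃ C : ℝ, ∀ q : ↥J → Y → ℝ,
      Rfun c ε f₁ f₂ μ ν (fun _ => 0) (glue J π q)
        = Rfun (fun (j : J) y => c j y) ε f₁ f₂ (fun (j : J) => μ j) ν (outMarg J π) q + C := by
  refine ⟨(∑ x, (Jᶜ).indicator (fun x => ∑ y, c x y * π x y) x)
    + ε * (∑ x, (Jᶜ).indicator (fun x => ∑ y, entT (μ x * ν y) (π x y)) x)
    + (∑ x, (Jᶜ).indicator (fun x => μ x * f₁ ((∑ y, π x y) / μ x)) x), fun q => ?_⟩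
  have hin : ∀ (j : J) y, glue J π q j y = q j y := fun j y => by simp [glue]
  have hout : ∀ x, x ∉ J → ∀ y, glue J π q x y = π x y := fun x hx y => by simp [glue, hx]
  have hind : ∀ G : X → (Y → ℝ) → ℝ, (Jᶜ).indicator (fun x => G x (glue J π q x))
      = (Jᶜ).indicator (fun x => G x (π x)) := by
    intro G
    funext x
    by_cases hx : x ∈ J
    · simp [hx]
    · have : glue J π q x = π x := funext (hout x hx)
      simp [hx, this]
  have hinf : ∀ (j : J), glue J π q j = q j := fun j => funext (hin j)
  unfold Rfun
  rw [sum_split J (fun x => ∑ y, c x y * glue J π q x y),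
    sum_split J (fun x => ∑ y, entT (μ x * ν y) (glue J π q x y)),
    sum_split J (fun x => μ x * f₁ ((∑ y, glue J π q x y) / μ x)),
    hind (fun x r => ∑ y, c x y * r y), hind (fun x r => ∑ y, entT (μ x * ν y) (r y)),
    hind (fun x r => μ x * f₁ ((∑ y, r y) / μ x))]
  have hy : ∀ y, (∑ x, glue J π q x y) = (∑ j : J, q j y) + outMarg J π y := by
    intro y
    rw [sum_split J (fun x => glue J π q x y), hind (fun x r => r y)]
    simp only [hinf]
    rfl
  simp only [hinf, hy, add_zero]
  ring

theorem slope_le {G : ℝ → ℝ} {d δ : ℝ} (hG : HasDerivAt G d 0)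
    (h : ∀ t, 0 < t → t < 1 → G t ≤ G 0 + t * δ) : d ≤ δ := by
  have ht := hG.tendsto_slope_zero_right
  refine le_of_tendsto ht ?_
  filter_upwards [Ioo_mem_nhdsGT (zero_lt_one' ℝ)] with t ht
  have := h t ht.1 ht.2
  rw [zero_add, smul_eq_mul, inv_mul_le_iff₀ ht.1]
  linarith

theorem le_slope {G : ℝ → ℝ} {d δ : ℝ} (hG : HasDerivAt G d 0)
    (h : ∀ t, 0 < t → t < 1 → G 0 + t * δ ≤ G t) : δ ≤ d := by
  have := slope_le (G := fun t => - G t) (δ := -δ) hG.neg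
    (fun t h0 h1 => by have := h t h0 h1; linarith)
  linarith

/-- the averaged ("safe") parallel update
`π̄ = ∑_J [(1 − 1/|𝒥|)π_J + (1/|𝒥|)π̃_J]` does not increase the global score,
and if the score stays equal then every cell plan was already optimal and `π`
is the global minimizer of `E`. -/
theorem safe_parallel_update_decrement
    {X Y : Type*} [Fintype X] [Fintype Y] [Nonempty X] [Nonempty Y]
    (μ : X → ℝ) (ν : Y → ℝ) (hμ : ∀ x, 0 < μ x) (hν : ∀ y, 0 < ν y)
    (c : X → Y → ℝ) (ε : ℝ) (hε : 0 < ε)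
    (φ₁ φ₂ : ℝ → EReal) (h₁ : AssumptionA φ₁) (h₂ : AssumptionA φ₂)
    {n : ℕ} (hn : 0 < n) (Js : Fin n → Set X) (hJs : IsFinPartition Js)
    (π : X → Y → ℝ) (hπ : ∀ x y, 0 ≤ π x y)
    (hfin : Eglobal c ε φ₁ φ₂ μ ν π ≠ ⊤)
    (tπ : (i : Fin n) → ↥(Js i) → Y → ℝ)
    (htπnn : ∀ i, ∀ (j : Js i) (y : Y), 0 ≤ tπ i j y)
    (htπ : ∀ i, ∀ π' : ↥(Js i) → Y → ℝ, (∀ (j : Js i) (y : Y), 0 ≤ π' j y) →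
      EJfun (fun (j : Js i) y => c j y) ε φ₁ φ₂ (fun (j : Js i) => μ j) ν
          (outMarg (Js i) π) (tπ i)
        ≤ EJfun (fun (j : Js i) y => c j y) ε φ₁ φ₂ (fun (j : Js i) => μ j) ν
          (outMarg (Js i) π) π') :
    let πbar : X → Y → ℝ := fun x y =>
      (1 - 1 / (n : ℝ)) * π x y
        + (1 / (n : ℝ)) * ∑ i, (if h : x ∈ Js i then tπ i ⟨x, h⟩ y else 0)
    Eglobal c ε φ₁ φ₂ μ ν πbar ≤ Eglobal c ε φ₁ φ₂ μ ν π ∧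
    (Eglobal c ε φ₁ φ₂ μ ν πbar = Eglobal c ε φ₁ φ₂ μ ν π →
      (∀ i, ∀ (j : Js i) (y : Y), tπ i j y = π j y) ∧
      ∀ π' : X → Y → ℝ, (∀ x y, 0 ≤ π' x y) →
        Eglobal c ε φ₁ φ₂ μ ν π ≤ Eglobal c ε φ₁ φ₂ μ ν π') := by
  intro πbar
  have hglob : ∀ p : X → Y → ℝ, (∀ x y, 0 ≤ p x y) → Eglobal c ε φ₁ φ₂ μ ν p
      = ((Rfun c ε (fun s => (φ₁ s).toReal) (fun s => (φ₂ s).toReal) μ ν (fun _ => 0) p : ℝ)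
        : EReal) := fun p hp => EJfun_coe c ε h₁ h₂ hμ hν (fun _ => le_rfl) hp
  have hgain := fun (p q : X → Y → ℝ) hp hq (a b : ℝ) ha hb hab x₀ y₀ =>
    Rfun_gain c hε h₁ h₂ hμ hν (p := p) (q := q) hp hq (a := a) (b := b) ha hb hab x₀ y₀
  have hdiff := fun (p : X → Y → ℝ) hp => Rfun_diff c ε h₁ h₂ hμ hν (p := p) hp
  have hmin : ∀ i, ∀ p : X → Y → ℝ, (∀ x y, 0 ≤ p x y) → (∀ x, x ∉ Js i → p x = π x) →
      Rfun c ε (fun s => (φ₁ s).toReal) (fun s => (φ₂ s).toReal) μ ν (fun _ => 0)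
          (glue (Js i) π (tπ i))
        ≤ Rfun c ε (fun s => (φ₁ s).toReal) (fun s => (φ₂ s).toReal) μ ν (fun _ => 0) p := by
    intro i p hp hpo
    have hpe : p = glue (Js i) π (fun j => p j) := by
      funext x y
      by_cases hx : x ∈ Js i
      · simp [glue, hx]
      · simp [glue, hx, hpo x hx]
    have hom : ∀ y, 0 ≤ outMarg (Js i) π y := fun y =>
      Finset.sum_nonneg fun x _ => Set.indicator_nonneg (fun x _ => hπ x y) x
    have h := htπ i (fun j => p j) (fun j y => hp j y)
    rw [EJfun_coe _ ε h₁ h₂ (fun j : Js i => hμ j) hν hom (htπnn i),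
      EJfun_coe _ ε h₁ h₂ (fun j : Js i => hμ j) hν hom (fun j y => hp j y), EReal.coe_le_coe_iff] at h
    obtain ⟨C, hC⟩ := Rfun_glue c ε (fun s => (φ₁ s).toReal) (fun s => (φ₂ s).toReal) μ ν (Js i) π
    rw [hpe, hC, hC]
    linarith
  generalize Rfun c ε (fun s => (φ₁ s).toReal) (fun s => (φ₂ s).toReal) μ ν (fun _ => 0) = F at *
  have hcv : ConvexOn ℝ {p : X → Y → ℝ | ∀ x y, 0 ≤ p x y} F := by
    refine ⟨?_, ?_⟩
    · intro p hp q hq a b ha hb hab x y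
      have := hp x y
      have := hq x y
      simp only [Pi.add_apply, Pi.smul_apply, smul_eq_mul]
      positivity
    · intro p hp q hq a b ha hb hab
      have x₀ : X := Classical.arbitrary X
      have y₀ : Y := Classical.arbitrary Y
      have h := hgain p q hp hq a b ha hb hab x₀ y₀
      have h' := mul_log_le (hp x₀ y₀) (hq x₀ y₀) ha hb hab
      have h'' := mul_nonpos_of_nonneg_of_nonpos hε.le h'
      have e : a • p + b • q = fun x y => a * p x y + b * q x y := by
        funext x y; simp
      rw [e]
      simp only [smul_eq_mul]
      linarith
  have hn' : (0 : ℝ) < n := by exact_mod_cast hn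
  set P : Fin n → X → Y → ℝ := fun i => glue (Js i) π (tπ i) with hP
  have hPnn : ∀ i x y, 0 ≤ P i x y := by
    intro i x y
    simp only [hP, glue]
    split_ifs
    · exact htπnn _ _ _
    · exact hπ x y
  have hPo : ∀ i x, x ∉ Js i → P i x = π x := by
    intro i x hx
    funext y
    simp [hP, glue, hx]
  -- every point lies in exactly one cell
  have hcell : ∀ x, ∃ k, x ∈ Js k ∧ ∀ i, x ∈ Js i → i = k := by
    intro x
    have hx : x ∈ ⋃ i, Js i := by rw [hJs.2.1]; trivial
    obtain ⟨k, hk⟩ := Set.mem_iUnion.1 hx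
    refine ⟨k, hk, fun i hi => ?_⟩
    by_contra hne
    exact Set.disjoint_left.1 (hJs.2.2 i k hne) hi hk
  -- sum over cells of local modifications
  have hsum : ∀ (Q : Fin n → X → Y → ℝ) (R : X → Y → ℝ),
      (∀ i x, x ∉ Js i → Q i x = π x) → (∀ i x, x ∈ Js i → Q i x = R x) →
      ∑ i, (Q i - π) = R - π := by
    intro Q R ho hi
    funext x y
    obtain ⟨k, hk, hu⟩ := hcell x
    simp only [Finset.sum_apply, Pi.sub_apply]
    rw [Finset.sum_eq_single k]
    · rw [hi k x hk]
    · intro i _ hne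
      rw [ho i x (fun h => hne (hu i h)), sub_self]
    · simp
  have hbar : πbar = ∑ i, (1 / (n : ℝ)) • P i := by
    have h := hsum P (fun x y => ∑ i, (if h : x ∈ Js i then tπ i ⟨x, h⟩ y else 0)) hPo ?_
    · rw [Finset.sum_sub_distrib, Finset.sum_const, Finset.card_univ, Fintype.card_fin] at h
      funext x y
      have h := congrFun (congrFun h x) y
      simp only [Pi.sub_apply, Pi.smul_apply, nsmul_eq_mul, Pi.mul_apply, Pi.natCast_apply] at h
      rw [← Finset.smul_sum]
      simp only [Pi.smul_apply, smul_eq_mul]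
      simp only [πbar]
      field_simp
      linarith
    · intro i x hx
      funext y
      rw [Finset.sum_eq_single i]
      · simp [hP, glue, hx]
      · intro j _ hne
        rw [dif_neg]
        intro hj
        obtain ⟨k, hk, hu⟩ := hcell x
        exact hne ((hu j hj).trans (hu i hx).symm)
      · simp
  have hw0 : ∀ i ∈ (Finset.univ : Finset (Fin n)), (0 : ℝ) ≤ 1 / (n : ℝ) :=
    fun _ _ => by positivity
  have hw1 : ∑ _i : Fin n, (1 / (n : ℝ)) = 1 := by
    rw [Finset.sum_const, Finset.card_univ, Fintype.card_fin, nsmul_eq_mul]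
    field_simp
  have hPi : ∀ i, F (P i) ≤ F π := fun i => hmin i π hπ (fun _ _ => rfl)
  have hbarnn : ∀ x y, 0 ≤ πbar x y := by
    have : πbar ∈ {p : X → Y → ℝ | ∀ x y, 0 ≤ p x y} := by
      rw [hbar]
      exact hcv.1.sum_mem hw0 hw1 (fun i _ => hPnn i)
    exact this
  have hJen : F πbar ≤ ∑ i, (1 / (n : ℝ)) * F (P i) := by
    rw [hbar]
    exact hcv.map_sum_le hw0 hw1 (fun i _ => hPnn i)
  have hle2 : ∑ i, (1 / (n : ℝ)) * F (P i) ≤ ∑ _i : Fin n, (1 / (n : ℝ)) * F π :=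
    Finset.sum_le_sum fun i hi => mul_le_mul_of_nonneg_left (hPi i) (hw0 i hi)
  have hconst : ∑ _i : Fin n, (1 / (n : ℝ)) * F π = F π := by
    rw [← Finset.sum_mul, hw1, one_mul]
  rw [hglob _ hbarnn, hglob _ hπ]
  refine ⟨EReal.coe_le_coe_iff.2 (by linarith), fun heq => ?_⟩
  have heq' : F πbar = F π := by exact_mod_cast heq
  have hFP : ∀ i, F (P i) = F π := by
    have h := (Finset.sum_eq_sum_iff_of_le
      (fun i hi => mul_le_mul_of_nonneg_left (hPi i) (hw0 i hi))).1
      (le_antisymm hle2 (by linarith))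
    intro i
    exact mul_left_cancel₀ (by positivity : (1 / (n : ℝ)) ≠ 0) (h i (Finset.mem_univ i))
  have hPe : ∀ i, P i = π := by
    intro i
    by_contra hne
    obtain ⟨x₀, hx₀⟩ := Function.ne_iff.1 hne
    obtain ⟨y₀, hy₀⟩ := Function.ne_iff.1 hx₀
    have h := hgain (P i) π (hPnn i) hπ (1/2) (1/2) (by norm_num) (by norm_num) (by norm_num) x₀ y₀
    have hs := Real.strictConvexOn_mul_log.2 (Set.mem_Ici.2 (hPnn i x₀ y₀))
      (Set.mem_Ici.2 (hπ x₀ y₀)) hy₀ (by norm_num : (0:ℝ) < 1/2) (by norm_num : (0:ℝ) < 1/2)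
      (by norm_num)
    simp only [smul_eq_mul] at hs
    have hm := hmin i (fun x y => 1/2 * P i x y + 1/2 * π x y)
      (fun x y => by have := hPnn i x y; have := hπ x y; positivity)
      (fun x hx => by funext y; rw [hPo i x hx]; ring)
    have hs' := mul_neg_of_pos_of_neg hε (sub_neg.2 hs)
    rw [hFP i] at h
    have hm' : F π ≤ _ := (hFP i).symm.le.trans hm
    linarith
  have hmin' : ∀ i, ∀ p : X → Y → ℝ, (∀ x y, 0 ≤ p x y) → (∀ x, x ∉ Js i → p x = π x) →
      F π ≤ F p := fun i p hp ho => (hFP i).symm.le.trans (hmin i p hp ho)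
  refine ⟨?_, ?_⟩
  · intro i j y
    have := congrFun (congrFun (hPe i) j) y
    simpa [hP, glue] using this
  -- positivity
  have hpos : ∀ x y, 0 < π x y := by
    intro x₀ y₀
    by_contra hc
    have h0 : π x₀ y₀ = 0 := le_antisymm (not_lt.1 hc) (hπ x₀ y₀)
    obtain ⟨k, hk, -⟩ := hcell x₀
    set q : X → Y → ℝ := fun x y => π x y + if x = x₀ ∧ y = y₀ then 1 else 0 with hq
    have hqnn : ∀ x y, 0 ≤ q x y := by
      intro x y
      have := hπ x y
      simp only [hq]
      split_ifs <;> linarith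
    have hq0 : q x₀ y₀ = 1 := by simp [hq, h0]
    set K := |F q - F π| with hK
    set t : ℝ := Real.exp (-((K + 1) / ε)) with ht
    have htp : 0 < t := Real.exp_pos _
    have hK0 : 0 ≤ K := abs_nonneg _
    have ht1 : t ≤ 1 := by
      rw [ht]
      apply Real.exp_le_one_iff.2
      have : 0 ≤ (K + 1) / ε := by positivity
      linarith
    have h := hgain π q hπ hqnn (1 - t) t (by linarith) htp.le (by ring) x₀ y₀
    have hm := hmin' k (fun x y => (1 - t) * π x y + t * q x y)
      (fun x y => add_nonneg (mul_nonneg (by linarith) (hπ x y)) (mul_nonneg htp.le (hqnn x y)))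
      (fun x hx => by
        funext y
        have : x ≠ x₀ := fun e => hx (e ▸ hk)
        simp only [hq, this, false_and, if_false]
        ring)
    rw [hq0, h0] at h
    simp only [mul_zero, zero_mul, zero_add, mul_one, Real.log_one, sub_zero] at h
    have hl : Real.log t = -((K + 1) / ε) := by rw [ht, Real.log_exp]
    rw [hl] at h
    have e : ε * (t * -((K + 1) / ε)) = - (t * (K + 1)) := by
      field_simp
    rw [e] at h
    have h3 : F q - F π ≤ K := le_abs_self _
    nlinarith [mul_le_mul_of_nonneg_left h3 htp.le]
  intro π' hπ'
  rw [hglob _ hπ']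
  refine EReal.coe_le_coe_iff.2 ?_
  have hD := (hdiff π hpos).hasFDerivAt
  set L := fderiv ℝ F π with hL
  have hline : ∀ p : X → Y → ℝ, HasDerivAt (fun t : ℝ => F (π + t • (p - π))) (L (p - π)) 0 :=
    fun p => hD.hasLineDerivAt (p - π)
  have hseg : ∀ (p : X → Y → ℝ) (t : ℝ), π + t • (p - π) = (1 - t) • π + t • p := by
    intro p t
    funext x y
    simp only [Pi.add_apply, Pi.smul_apply, Pi.sub_apply, smul_eq_mul]
    ring
  have hup : L (π' - π) ≤ F π' - F π := by
    refine slope_le (hline π') fun t h0 h1 => ?_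
    have := hcv.2 hπ hπ' (by linarith : 0 ≤ 1 - t) h0.le (by ring)
    simp only [smul_eq_mul] at this
    simp only [zero_smul, add_zero]
    rw [hseg]
    linarith
  have hlow : 0 ≤ L (π' - π) := by
    have hs := hsum (fun i => glue (Js i) π (fun j => π' j)) π'
      (fun i x hx => by funext y; simp [glue, hx]) (fun i x hx => by funext y; simp [glue, hx])
    rw [← hs, map_sum]
    refine Finset.sum_nonneg fun i _ => ?_
    have hgn : ∀ x y, 0 ≤ glue (Js i) π (fun j => π' j) x y := by
      intro x y
      simp only [glue]
      split_ifs
      · exact hπ' _ _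
      · exact hπ _ _
    refine le_slope (hline _) fun t h0 h1 => ?_
    simp only [zero_smul, add_zero, mul_zero]
    rw [hseg]
    refine hmin' i _ (hcv.1 hπ hgn (by linarith : 0 ≤ 1 - t) h0.le (by ring)) fun x hx => ?_
    funext y
    simp only [Pi.add_apply, Pi.smul_apply, smul_eq_mul, glue, hx, dif_neg, not_false_eq_true]
    ring
  linarith

end
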